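/- Let φ = (1+√5)/2 and ξ ∈ ℝ, and let M = M(ξ, −ξ, 2−ξ). Then M·(−1,1,1) = (ξ² − ξ − 1)·(−1,1,1), M·(1, φ⁻², φ²) = (φ² − 1 − ξ)²·(1, φ⁻², φ²), and M·(1, φ², φ⁻²) = (φ⁻² − 1 − ξ)²·(1, φ², φ⁻²). Moreover (φ² − 1 − ξ)²·(φ⁻² − 1 − ξ)² = (ξ² − ξ − 1)². -/

import Mathlib

/-- The matrix `M(ρ, σ, τ)`. -/
def M (ρ σ τ : ℝ) : Matrix (Fin 3) (Fin 3) ℝ :=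
  !![ρ * (ρ - 1), ρ, 1 - ρ;
     1 - σ, σ * (σ - 1), σ;
     τ, 1 - τ, τ * (τ - 1)]

/-- The golden ratio. -/
noncomputable def phi : ℝ := (1 + Real.sqrt 5) / 2

/-!
The two golden-ratio eigenvectors have the form `(1, t, s)` with `s + t = 3` and `s * t = 1`, where
`{s, t} = {φ², φ⁻²}`. These two symmetric relations are all that the computation uses, so exchanging
`s` and `t` turns one eigenvector into the other, and they give
`(s - 1 - ξ) * (t - 1 - ξ) = ξ² - ξ - 1`.
-/

open Matrix

lemma phi_eq_goldenRatio : phi = Real.goldenRatio := rfl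

lemma phi_sq_mul_inv : phi ^ 2 * (phi ^ 2)⁻¹ = 1 := by
  rw [phi_eq_goldenRatio]
  exact mul_inv_cancel₀ (pow_ne_zero 2 Real.goldenRatio_ne_zero)

lemma phi_sq_add_inv : phi ^ 2 + (phi ^ 2)⁻¹ = 3 := by
  rw [phi_eq_goldenRatio, ← inv_pow, Real.inv_goldenRatio, neg_sq, Real.goldenRatio_sq,
    Real.goldenConj_sq]
  linear_combination Real.goldenRatio_add_goldenConj

lemma M_mulVec (ρ σ τ x y z : ℝ) :
    M ρ σ τ *ᵥ ![x, y, z] =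
      ![ρ * (ρ - 1) * x + ρ * y + (1 - ρ) * z,
        (1 - σ) * x + σ * (σ - 1) * y + σ * z,
        τ * x + (1 - τ) * y + τ * (τ - 1) * z] := by
  simp only [M, cons_mulVec, empty_mulVec, vec3_dotProduct']

lemma M_mulVec_neg_one_one_one (ξ : ℝ) :
    M ξ (-ξ) (2 - ξ) *ᵥ ![-1, 1, 1] = (ξ ^ 2 - ξ - 1) • ![-1, 1, 1] := by
  simp only [M_mulVec, smul_cons, smul_empty, smul_eq_mul]
  congrm ![?_, ?_, ?_] <;> ring

lemma M_mulVec_of_add_eq_three_of_mul_eq_one {s t : ℝ} (hadd : s + t = 3) (hmul : s * t = 1)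
    (ξ : ℝ) : M ξ (-ξ) (2 - ξ) *ᵥ ![1, t, s] = (s - 1 - ξ) ^ 2 • ![1, t, s] := by
  obtain rfl : t = 3 - s := eq_sub_of_add_eq' hadd
  have hsq : s ^ 2 = 3 * s - 1 := by linear_combination -hmul
  simp only [M_mulVec, smul_cons, smul_empty, smul_eq_mul]
  congrm ![?_, ?_, ?_]
  · linear_combination -hsq
  · linear_combination (s - 2 - 2 * ξ) * hsq
  · linear_combination (2 * ξ - 1 - s) * hsq

lemma sub_mul_sub_of_add_eq_three_of_mul_eq_one {R : Type*} [CommRing R] {s t : R}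
    (hadd : s + t = 3) (hmul : s * t = 1) (ξ : R) :
    (s - 1 - ξ) * (t - 1 - ξ) = ξ ^ 2 - ξ - 1 := by
  linear_combination hmul - (1 + ξ) * hadd

theorem eigenstructure_second_family (ξ : ℝ) :
    (M ξ (-ξ) (2 - ξ)).mulVec ![-1, 1, 1] =
        (ξ ^ 2 - ξ - 1) • ![-1, 1, 1] ∧
      (M ξ (-ξ) (2 - ξ)).mulVec ![1, (phi ^ 2)⁻¹, phi ^ 2] =
        (phi ^ 2 - 1 - ξ) ^ 2 • ![1, (phi ^ 2)⁻¹, phi ^ 2] ∧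
      (M ξ (-ξ) (2 - ξ)).mulVec ![1, phi ^ 2, (phi ^ 2)⁻¹] =
        ((phi ^ 2)⁻¹ - 1 - ξ) ^ 2 • ![1, phi ^ 2, (phi ^ 2)⁻¹] ∧
      (phi ^ 2 - 1 - ξ) ^ 2 * ((phi ^ 2)⁻¹ - 1 - ξ) ^ 2 =
        (ξ ^ 2 - ξ - 1) ^ 2 := by
  have hadd := phi_sq_add_inv
  have hmul := phi_sq_mul_inv
  refine ⟨M_mulVec_neg_one_one_one ξ,
    M_mulVec_of_add_eq_three_of_mul_eq_one hadd hmul ξ,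
    M_mulVec_of_add_eq_three_of_mul_eq_one (by rwa [add_comm]) (by rwa [mul_comm]) ξ, ?_⟩
  rw [← mul_pow, sub_mul_sub_of_add_eq_three_of_mul_eq_one hadd hmul]
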